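/- Let p : ℝ^{n₁} × ℝ^{n₂} → ℝ be a polynomial of total degree at most d, let G be a standard Gaussian random vector on ℝ^{n₁}, let B be uniformly distributed on {−1,1}^{n₂} independent of G, and let t ≥ 2 be a real number. Then E[|p(G,B)|^t] ≤ (t−1)^{td/2}·E[p(G,B)²]^{t/2}. -/

import Mathlib

open MeasureTheory ProbabilityTheory
open scoped ENNReal

/-- The standard Gaussian measure on `ℝⁿ`. -/
noncomputable def stdGaussian (n : ℕ) : Measure (Fin n → ℝ) :=
  Measure.pi fun _ => gaussianReal 0 1

/-- The uniform (Bernoulli) measure on `{-1, 1}`. -/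
noncomputable def bernoulliPM : Measure ℝ :=
  ((1 : ℝ≥0∞) / 2) • Measure.dirac (1 : ℝ) + ((1 : ℝ≥0∞) / 2) • Measure.dirac (-1 : ℝ)

/-- The uniform measure on `{-1, 1}ⁿ`. -/
noncomputable def bernoulliCube (n : ℕ) : Measure (Fin n → ℝ) :=
  Measure.pi fun _ => bernoulliPM

lemma hc_Fpos {t x : ℝ} (hx0 : 0 ≤ x) (hx1 : x < 1) :
    0 < ((1 + x) ^ t + (1 - x) ^ t) / 2 := by
  have h1 : 0 < (1 + x) ^ t := Real.rpow_pos_of_pos (by linarith) t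
  have h2 : 0 < (1 - x) ^ t := Real.rpow_pos_of_pos (by linarith) t
  linarith

lemma hc_deriv (s x : ℝ) (hx0 : -1 < x) (hx1 : x < 1) :
    HasDerivAt (fun x : ℝ => ((1 + x) ^ s + (1 - x) ^ s) / 2)
      (s * (((1 + x) ^ (s - 1) - (1 - x) ^ (s - 1)) / 2)) x := by
  have h1 := ((hasDerivAt_id x).const_add 1).rpow_const (p := s) (Or.inl (by simp; linarith))
  have h2 := ((hasDerivAt_id x).const_sub 1).rpow_const (p := s) (Or.inl (by simp; linarith))
  refine ((h1.add h2).div_const 2).congr_deriv ?_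
  simp only [id]; ring

lemma hc_deriv' (s x : ℝ) (hx0 : -1 < x) (hx1 : x < 1) :
    HasDerivAt (fun x : ℝ => ((1 + x) ^ s - (1 - x) ^ s) / 2)
      (s * (((1 + x) ^ (s - 1) + (1 - x) ^ (s - 1)) / 2)) x := by
  have h1 := ((hasDerivAt_id x).const_add 1).rpow_const (p := s) (Or.inl (by simp; linarith))
  have h2 := ((hasDerivAt_id x).const_sub 1).rpow_const (p := s) (Or.inl (by simp; linarith))
  refine ((h1.sub h2).div_const 2).congr_deriv ?_
  simp only [id]; ring

/-- monotonicity of the symmetrised power -/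
lemma hc_Fmono {t x y : ℝ} (ht : 2 ≤ t) (hx0 : 0 ≤ x) (hxy : x ≤ y) (hy : y < 1) :
    ((1 + x) ^ t + (1 - x) ^ t) / 2 ≤ ((1 + y) ^ t + (1 - y) ^ t) / 2 := by
  have hm : MonotoneOn (fun x : ℝ => ((1 + x) ^ t + (1 - x) ^ t) / 2) (Set.Ico 0 1) := by
    apply monotoneOn_of_hasDerivWithinAt_nonneg (convex_Ico 0 1)
      (f' := fun x => t * (((1 + x) ^ (t - 1) - (1 - x) ^ (t - 1)) / 2))
    · intro z hz
      exact (hc_deriv t z (by linarith [hz.1]) hz.2).continuousAt.continuousWithinAt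
    · intro z hz
      rw [interior_Ico] at hz
      exact (hc_deriv t z (by linarith [hz.1]) hz.2).hasDerivWithinAt
    · intro z hz
      rw [interior_Ico] at hz
      have : (1 - z) ^ (t - 1) ≤ (1 + z) ^ (t - 1) :=
        Real.rpow_le_rpow (by linarith [hz.2]) (by linarith [hz.1]) (by linarith)
      apply mul_nonneg <;> linarith
  exact hm ⟨hx0, by linarith⟩ ⟨by linarith, hy⟩ hxy

/-- power mean inequality -/
lemma hc_pm {t u v : ℝ} (ht : 2 ≤ t) (hu : 0 ≤ u) (hv : 0 ≤ v) :
    (u ^ (t - 2) + v ^ (t - 2)) / 2 ≤ ((u ^ t + v ^ t) / 2) ^ ((t - 2) / t) := by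
  have ht0 : 0 < t := by linarith
  have hc := Real.concaveOn_rpow (p := (t - 2) / t) (by apply div_nonneg <;> linarith)
    (by rw [div_le_one ht0]; linarith)
  obtain ⟨_, hc⟩ := hc
  have := hc (Set.mem_Ici.2 (Real.rpow_nonneg hu t)) (Set.mem_Ici.2 (Real.rpow_nonneg hv t))
    (show (0 : ℝ) ≤ 1 / 2 by norm_num) (show (0 : ℝ) ≤ 1 / 2 by norm_num) (by norm_num)
  simp only [smul_eq_mul] at this
  rw [← Real.rpow_mul hu, ← Real.rpow_mul hv, mul_div_cancel₀ _ ht0.ne'] at this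
  calc _ = 1 / 2 * u ^ (t - 2) + 1 / 2 * v ^ (t - 2) := by ring
    _ ≤ _ := this
    _ = _ := by congr 1; ring

lemma hc_Fder {t x : ℝ} (ht : 2 ≤ t) (hx0 : 0 ≤ x) (hx1 : x < 1) :
    ((1 + x) ^ (t - 1) - (1 - x) ^ (t - 1)) / 2 ≤
      (t - 1) * x * (((1 + x) ^ t + (1 - x) ^ t) / 2) ^ ((t - 2) / t) := by
  rcases hx0.eq_or_lt with rfl | hx
  · simp
  obtain ⟨ξ, hξ, h⟩ := exists_hasDerivAt_eq_slope
    (fun x : ℝ => ((1 + x) ^ (t - 1) - (1 - x) ^ (t - 1)) / 2)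
    (fun x => (t - 1) * (((1 + x) ^ (t - 1 - 1) + (1 - x) ^ (t - 1 - 1)) / 2)) hx
    (fun z hz => (hc_deriv' _ z (by linarith [hz.1]) (by linarith [hz.2])).continuousAt.continuousWithinAt)
    (fun z hz => hc_deriv' _ z (by linarith [hz.1]) (by linarith [hz.2]))
  have h1 := hc_pm (u := 1 + ξ) (v := 1 - ξ) ht (by linarith [hξ.1]) (by linarith [hξ.2])
  have h2 := hc_Fmono ht hξ.1.le hξ.2.le hx1
  have h3 := Real.rpow_le_rpow (hc_Fpos (t := t) hξ.1.le (hξ.2.trans hx1)).le h2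
    (z := (t - 2) / t) (by apply div_nonneg <;> linarith)
  have e : t - 1 - 1 = t - 2 := by ring
  simp only [e] at h
  rw [eq_div_iff (by linarith)] at h
  simp only [add_zero, sub_zero, sub_self, zero_div] at h
  rw [← h]
  have : 0 ≤ (t - 1) * x := mul_nonneg (by linarith) hx.le
  nlinarith [mul_le_mul_of_nonneg_left (h1.trans h3) this]

lemma hc_two_aux {t x : ℝ} (ht : 2 ≤ t) (hx0 : 0 ≤ x) (hx1 : x < 1) :
    (((1 + x) ^ t + (1 - x) ^ t) / 2) ^ (2 / t) ≤ 1 + (t - 1) * x ^ 2 := by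
  have ht0 : 0 < t := by linarith
  have key : ∀ z : ℝ, 0 ≤ z → z < 1 → HasDerivAt
      (fun x : ℝ => (((1 + x) ^ t + (1 - x) ^ t) / 2) ^ (2 / t) - (t - 1) * x ^ 2)
      (t * (((1 + z) ^ (t - 1) - (1 - z) ^ (t - 1)) / 2) * (2 / t) *
        (((1 + z) ^ t + (1 - z) ^ t) / 2) ^ (2 / t - 1) - (t - 1) * (2 * z)) z := by
    intro z hz0 hz1
    have h1 := (hc_deriv t z (by linarith) hz1).rpow_const (p := 2 / t)
      (Or.inl (hc_Fpos hz0 hz1).ne')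
    have h2 := ((hasDerivAt_id z).pow 2).const_mul (t - 1)
    refine (h1.sub h2).congr_deriv ?_
    simp
  have hm : AntitoneOn (fun x : ℝ => (((1 + x) ^ t + (1 - x) ^ t) / 2) ^ (2 / t)
      - (t - 1) * x ^ 2) (Set.Ico 0 1) := by
    apply antitoneOn_of_hasDerivWithinAt_nonpos (convex_Ico 0 1)
    · intro z hz
      exact (key z hz.1 hz.2).continuousAt.continuousWithinAt
    · intro z hz
      rw [interior_Ico] at hz
      exact (key z hz.1.le hz.2).hasDerivWithinAt
    · intro z hz
      rw [interior_Ico] at hz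
      have hF := hc_Fpos (t := t) hz.1.le hz.2
      have h := hc_Fder ht hz.1.le hz.2
      set F := ((1 + z) ^ t + (1 - z) ^ t) / 2
      have e : F ^ ((t - 2) / t) * F ^ (2 / t - 1) = 1 := by
        rw [← Real.rpow_add hF]
        have : (t - 2) / t + (2 / t - 1) = 0 := by field_simp; ring
        rw [this, Real.rpow_zero]
      have h4 := mul_le_mul_of_nonneg_right h (Real.rpow_nonneg hF.le (2 / t - 1))
      rw [mul_assoc _ _ (F ^ (2 / t - 1)), e] at h4
      have e2 : t * (((1 + z) ^ (t - 1) - (1 - z) ^ (t - 1)) / 2) * (2 / t) * F ^ (2 / t - 1)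
        = 2 * ((((1 + z) ^ (t - 1) - (1 - z) ^ (t - 1)) / 2) * F ^ (2 / t - 1)) := by
        field_simp
      rw [e2]
      linarith
  have := hm ⟨le_refl 0, one_pos⟩ ⟨hx0, hx1⟩ hx0
  simp at this
  linarith

lemma hc_two_lt {t a b : ℝ} (ht : 2 ≤ t) (hb : 0 ≤ b) (hab : b < a) :
    ((a + b) ^ t + (a - b) ^ t) / 2 ≤ (a ^ 2 + (t - 1) * b ^ 2) ^ (t / 2) := by
  have ht0 : 0 < t := by linarith
  have ha : 0 < a := by linarith
  have h := hc_two_aux ht (x := b / a) (by positivity) (by rw [div_lt_one ha]; exact hab)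
  have hF := hc_Fpos (t := t) (x := b / a) (by positivity) (by rw [div_lt_one ha]; exact hab)
  have h2 := Real.rpow_le_rpow (Real.rpow_nonneg hF.le _) h (z := t / 2) (by positivity)
  rw [← Real.rpow_mul hF.le, show 2 / t * (t / 2) = 1 by field_simp, Real.rpow_one] at h2
  have hba : b / a < 1 := by rw [div_lt_one ha]; exact hab
  have hba0 : 0 ≤ b / a := by positivity
  have e1 : a + b = a * (1 + b / a) := by field_simp
  have e2 : a - b = a * (1 - b / a) := by field_simp
  have e3 : a ^ 2 + (t - 1) * b ^ 2 = a ^ 2 * (1 + (t - 1) * (b / a) ^ 2) := by field_simp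
  have e4 : (a ^ 2) ^ (t / 2) = a ^ t := by
    rw [← Real.rpow_natCast, ← Real.rpow_mul ha.le]; congr 1; push_cast; ring
  rw [e1, e2, e3, Real.mul_rpow ha.le (by linarith), Real.mul_rpow ha.le (by linarith),
    Real.mul_rpow (by positivity) (by nlinarith [sq_nonneg (b / a)]), e4]
  have := mul_le_mul_of_nonneg_left h2 (Real.rpow_nonneg ha.le t)
  linarith

lemma hc_two_le {t a b : ℝ} (ht : 2 ≤ t) (hb : 0 ≤ b) (hab : b ≤ a) :
    (|a + b| ^ t + |a - b| ^ t) / 2 ≤ (a ^ 2 + (t - 1) * b ^ 2) ^ (t / 2) := by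
  have hc1 : Continuous fun a : ℝ => (|a + b| ^ t + |a - b| ^ t) / 2 := by
    have : ∀ x : ℝ, 0 ≤ t := fun _ => by linarith
    refine ((Continuous.rpow_const (by fun_prop) (fun _ => Or.inr (by linarith))).add
      (Continuous.rpow_const (by fun_prop) (fun _ => Or.inr (by linarith)))).div_const 2
  have hc2 : Continuous fun a : ℝ => (a ^ 2 + (t - 1) * b ^ 2) ^ (t / 2) :=
    Continuous.rpow_const (by fun_prop) (fun _ => Or.inr (by linarith))
  have : ∀ a ∈ closure (Set.Ioi b), (|a + b| ^ t + |a - b| ^ t) / 2 ≤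
      (a ^ 2 + (t - 1) * b ^ 2) ^ (t / 2) := by
    intro a ha
    refine le_on_closure (s := Set.Ioi b) (f := fun a : ℝ => (|a + b| ^ t + |a - b| ^ t) / 2)
      (fun x hx => ?_) hc1.continuousOn hc2.continuousOn ha
    have hx : b < x := hx
    rw [abs_of_nonneg (by linarith), abs_of_nonneg (by linarith)]
    exact hc_two_lt ht hb hx
  exact this a (by rw [closure_Ioi]; exact hab)

lemma hc_two_nonneg {t a b : ℝ} (ht : 2 ≤ t) (ha : 0 ≤ a) (hb : 0 ≤ b) :
    (|a + b| ^ t + |a - b| ^ t) / 2 ≤ (a ^ 2 + (t - 1) * b ^ 2) ^ (t / 2) := by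
  rcases le_total b a with h | h
  · exact hc_two_le ht hb h
  · have h1 := hc_two_le ht ha h
    rw [add_comm b a, abs_sub_comm b a] at h1
    refine h1.trans (Real.rpow_le_rpow (by nlinarith [sq_nonneg a, sq_nonneg b]) ?_ (by linarith))
    nlinarith [mul_nonneg (sub_nonneg.2 ht) (sub_nonneg.2 (pow_le_pow_left₀ ha h 2))]

/-- The two point inequality. -/
lemma hc_two_point {t : ℝ} (ht : 2 ≤ t) (a b : ℝ) :
    (|a + b| ^ t + |a - b| ^ t) / 2 ≤ (a ^ 2 + (t - 1) * b ^ 2) ^ (t / 2) := by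
  have h := hc_two_nonneg ht (abs_nonneg a) (abs_nonneg b)
  rw [sq_abs, sq_abs] at h
  refine le_trans (le_of_eq ?_) h
  rcases abs_cases a with ⟨h1, _⟩ | ⟨h1, _⟩ <;> rcases abs_cases b with ⟨h2, _⟩ | ⟨h2, _⟩ <;>
    rw [h1, h2]
  · rw [sub_neg_eq_add, ← sub_eq_add_neg, add_comm]
  · rw [show -a + b = -(a - b) by ring, show -a - b = -(a + b) by ring, abs_neg, abs_neg, add_comm]
  · rw [show -a + -b = -(a + b) by ring, show -a - -b = -(a - b) by ring, abs_neg, abs_neg]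

set_option linter.unusedSectionVars false

/-- All finite moments. -/
def HCAllLp {Ω : Type*} [MeasurableSpace Ω] (f : Ω → ℝ) (μ : Measure Ω) : Prop :=
  ∀ q : ℝ≥0∞, q ≠ ⊤ → MemLp f q μ

section
variable {Ω : Type*} [MeasurableSpace Ω] {μ : Measure Ω} {f g : Ω → ℝ}

lemma HCAllLp.mul (hf : HCAllLp f μ) (hg : HCAllLp g μ) : HCAllLp (fun x => f x * g x) μ := by
  intro q hq
  have hq2 : 2 * q ≠ ⊤ := ENNReal.mul_ne_top (by simp) hq
  have : ENNReal.HolderTriple (2 * q) (2 * q) q := ⟨by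
    rw [ENNReal.mul_inv (by simp) (by simp), ← add_mul, ENNReal.inv_two_add_inv_two, one_mul]⟩
  exact MemLp.mul' (hg _ hq2) (hf _ hq2)

lemma HCAllLp.add (hf : HCAllLp f μ) (hg : HCAllLp g μ) : HCAllLp (fun x => f x + g x) μ :=
  fun q hq => (hf q hq).add (hg q hq)

lemma HCAllLp.sub (hf : HCAllLp f μ) (hg : HCAllLp g μ) : HCAllLp (fun x => f x - g x) μ :=
  fun q hq => (hf q hq).sub (hg q hq)

lemma HCAllLp.const_mul (hf : HCAllLp f μ) (c : ℝ) : HCAllLp (fun x => c * f x) μ :=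
  fun q hq => (hf q hq).const_mul c

lemma HCAllLp.pow [IsFiniteMeasure μ] (hf : HCAllLp f μ) (k : ℕ) :
    HCAllLp (fun x => f x ^ k) μ := by
  induction k with
  | zero => intro q _; simpa using memLp_const (1 : ℝ)
  | succ k ih => simpa only [pow_succ] using ih.mul hf

lemma HCAllLp.integrable (hf : HCAllLp f μ) : Integrable f μ :=
  memLp_one_iff_integrable.1 (hf 1 (by simp))

lemma HCAllLp.integrable_rpow [IsFiniteMeasure μ] (hf : HCAllLp f μ) {t : ℝ} (ht : 0 ≤ t) :
    Integrable (fun x => |f x| ^ t) μ := by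
  have := (hf (ENNReal.ofReal t) (by simp)).integrable_norm_rpow'
  simpa [ENNReal.toReal_ofReal ht] using this

lemma HCAllLp.integrable_sq [IsFiniteMeasure μ] (hf : HCAllLp f μ) :
    Integrable (fun x => f x ^ 2) μ := (hf.pow 2).integrable

lemma hc_minkowski [IsFiniteMeasure μ] (hf : HCAllLp f μ) (hg : HCAllLp g μ) {s : ℝ} (hs : 1 ≤ s)
    {a b : ℝ} (ha : 0 ≤ a) (hb : 0 ≤ b)
    (hfa : ∫ x, |f x| ^ s ∂μ ≤ a ^ s) (hgb : ∫ x, |g x| ^ s ∂μ ≤ b ^ s) :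
    ∫ x, |f x + g x| ^ s ∂μ ≤ (a + b) ^ s := by
  have hs0 : 0 < s := by linarith
  have key : ∀ (h : Ω → ℝ), HCAllLp h μ → eLpNorm h (ENNReal.ofReal s) μ =
      ENNReal.ofReal ((∫ x, |h x| ^ s ∂μ) ^ s⁻¹) := by
    intro h hh
    have := (hh (ENNReal.ofReal s) (by simp)).eLpNorm_eq_integral_rpow_norm (by simpa using hs0)
      (by simp)
    simpa [ENNReal.toReal_ofReal hs0.le] using this
  have tri := eLpNorm_add_le (p := ENNReal.ofReal s) (hf 1 (by simp)).1 (hg 1 (by simp)).1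
    (by simpa using hs)
  have hi : ∀ h : Ω → ℝ, 0 ≤ ∫ x, |h x| ^ s ∂μ := fun h =>
    integral_nonneg fun x => Real.rpow_nonneg (abs_nonneg _) _
  have e1 := key _ (hf.add hg)
  have e1' : eLpNorm (f + g) (ENNReal.ofReal s) μ =
      ENNReal.ofReal ((∫ x, |f x + g x| ^ s ∂μ) ^ s⁻¹) := e1
  rw [e1', key _ hf, key _ hg, ← ENNReal.ofReal_add (Real.rpow_nonneg (hi _) _)
    (Real.rpow_nonneg (hi _) _), ENNReal.ofReal_le_ofReal_iff (add_nonneg (Real.rpow_nonneg (hi _) _)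
    (Real.rpow_nonneg (hi _) _))] at tri
  have h1 : (∫ x, |f x| ^ s ∂μ) ^ s⁻¹ ≤ a := by
    have := Real.rpow_le_rpow (hi f) hfa (z := s⁻¹) (by positivity)
    rwa [Real.rpow_rpow_inv ha hs0.ne'] at this
  have h2 : (∫ x, |g x| ^ s ∂μ) ^ s⁻¹ ≤ b := by
    have := Real.rpow_le_rpow (hi g) hgb (z := s⁻¹) (by positivity)
    rwa [Real.rpow_rpow_inv hb hs0.ne'] at this
  have h3 := Real.rpow_le_rpow (Real.rpow_nonneg (hi fun x => f x + g x) _)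
    (tri.trans (add_le_add h1 h2)) hs0.le
  rwa [Real.rpow_inv_rpow (hi fun x => f x + g x) hs0.ne'] at h3

lemma hc_sq_rpow (x t : ℝ) : (x ^ 2) ^ (t / 2) = |x| ^ t := by
  rw [← sq_abs, ← Real.rpow_natCast, ← Real.rpow_mul (abs_nonneg x)]; congr 1; push_cast; ring

/-- induction step -/
lemma hc_step [IsFiniteMeasure μ] {A B : Ω → ℝ} (hA : HCAllLp A μ) (hB : HCAllLp B μ)
    {t : ℝ} (ht : 2 ≤ t) {d : ℕ}
    (h1 : ∫ x, |A x| ^ t ∂μ ≤ (t - 1) ^ (t * d / 2) * (∫ x, A x ^ 2 ∂μ) ^ (t / 2))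
    (h2 : ∫ x, |B x| ^ t ∂μ ≤ (t - 1) ^ (t * ((d : ℝ) - 1) / 2) * (∫ x, B x ^ 2 ∂μ) ^ (t / 2)) :
    (∫ x, |A x + B x| ^ t ∂μ + ∫ x, |A x - B x| ^ t ∂μ) / 2 ≤ (t - 1) ^ (t * d / 2) *
      ((∫ x, (A x + B x) ^ 2 ∂μ + ∫ x, (A x - B x) ^ 2 ∂μ) / 2) ^ (t / 2) := by
  have ht0 : 0 < t := by linarith
  have ht1 : 0 < t - 1 := by linarith
  have hα : 0 ≤ ∫ x, A x ^ 2 ∂μ := integral_nonneg fun x => sq_nonneg _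
  have hβ : 0 ≤ ∫ x, B x ^ 2 ∂μ := integral_nonneg fun x => sq_nonneg _
  have e2 : (∫ x, (A x + B x) ^ 2 ∂μ + ∫ x, (A x - B x) ^ 2 ∂μ) / 2 =
      ∫ x, A x ^ 2 ∂μ + ∫ x, B x ^ 2 ∂μ := by
    rw [← integral_add (hA.add hB).integrable_sq (hA.sub hB).integrable_sq,
      ← integral_add hA.integrable_sq hB.integrable_sq, ← integral_div]
    congr 1; ext x; ring
  rw [e2]
  set α := ∫ x, A x ^ 2 ∂μ
  set β := ∫ x, B x ^ 2 ∂μ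
  have hb2 : HCAllLp (fun x => (t - 1) * B x ^ 2) μ := (hB.pow 2).const_mul _
  have m1 : ∫ x, |A x ^ 2| ^ (t / 2) ∂μ ≤ ((t - 1) ^ (d : ℝ) * α) ^ (t / 2) := by
    rw [Real.mul_rpow (by positivity) hα, ← Real.rpow_mul ht1.le]
    simp only [abs_sq, hc_sq_rpow]
    convert h1 using 3; ring
  have m2 : ∫ x, |(t - 1) * B x ^ 2| ^ (t / 2) ∂μ ≤ ((t - 1) ^ (d : ℝ) * β) ^ (t / 2) := by
    rw [Real.mul_rpow (by positivity) hβ, ← Real.rpow_mul ht1.le]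
    have : ∀ x, |(t - 1) * B x ^ 2| ^ (t / 2) = (t - 1) ^ (t / 2) * |B x| ^ t := fun x => by
      rw [abs_of_nonneg (by positivity), Real.mul_rpow ht1.le (sq_nonneg _), hc_sq_rpow]
    simp only [this]
    rw [integral_const_mul]
    refine (mul_le_mul_of_nonneg_left h2 (by positivity)).trans (le_of_eq ?_)
    rw [← mul_assoc, ← Real.rpow_add ht1]
    congr 2; ring
  have m3 := hc_minkowski (hA.pow 2) hb2 (s := t / 2) (by linarith) (by positivity) (by positivity)
    m1 m2
  rw [← mul_add, Real.mul_rpow (by positivity) (by positivity), ← Real.rpow_mul ht1.le] at m3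
  rw [← integral_add ((hA.add hB).integrable_rpow ht0.le) ((hA.sub hB).integrable_rpow ht0.le),
    ← integral_div]
  calc _ ≤ ∫ x, |A x ^ 2 + (t - 1) * B x ^ 2| ^ (t / 2) ∂μ := by
        refine integral_mono ?_ (((hA.pow 2).add hb2).integrable_rpow (by positivity)) ?_
        · exact (((hA.add hB).integrable_rpow ht0.le).add
            ((hA.sub hB).integrable_rpow ht0.le)).div_const 2
        · intro x
          simp only
          rw [abs_of_nonneg (a := A x ^ 2 + (t - 1) * B x ^ 2) (by positivity)]
          exact hc_two_point ht _ _
    _ ≤ _ := m3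
    _ = _ := by congr 2; ring
end

/-- Hypercontractive graded family. -/
structure HCFam {Ω : Type*} [MeasurableSpace Ω] (μ : Measure Ω) (V : ℕ → Submodule ℝ (Ω → ℝ)) :
    Prop where
  mono : Monotone V
  meas : ∀ d f, f ∈ V d → Measurable f
  allLp : ∀ d f, f ∈ V d → HCAllLp f μ
  ineq : ∀ d f, f ∈ V d → ∀ t : ℝ, 2 ≤ t →
    ∫ x, |f x| ^ t ∂μ ≤ (t - 1) ^ (t * d / 2) * (∫ x, f x ^ 2 ∂μ) ^ (t / 2)

/-- Adjoin one variable. -/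
def hcExt {Ω : Type*} (V : ℕ → Submodule ℝ (Ω → ℝ)) (d : ℕ) : Submodule ℝ (Ω × ℝ → ℝ) :=
  Submodule.span ℝ {f | ∃ (k e : ℕ) (a : Ω → ℝ), a ∈ V e ∧ e + k ≤ d ∧
    f = fun z => a z.1 * z.2 ^ k}

section
variable {Ω : Type*} [MeasurableSpace Ω] {μ : Measure Ω} {V : ℕ → Submodule ℝ (Ω → ℝ)}

lemma hcExt_gen {d k e : ℕ} {a : Ω → ℝ} (ha : a ∈ V e) (h : e + k ≤ d) :
    (fun z : Ω × ℝ => a z.1 * z.2 ^ k) ∈ hcExt V d :=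
  Submodule.subset_span ⟨k, e, a, ha, h, rfl⟩

lemma hcExt_mono : Monotone (hcExt V) := by
  intro d d' h
  apply Submodule.span_mono
  rintro f ⟨k, e, a, ha, hk, rfl⟩
  exact ⟨k, e, a, ha, hk.trans h, rfl⟩

lemma hcExt_meas (hV : ∀ d f, f ∈ V d → Measurable f) {d : ℕ} {f : Ω × ℝ → ℝ}
    (hf : f ∈ hcExt V d) : Measurable f := by
  induction hf using Submodule.span_induction with
  | mem f hf =>
    obtain ⟨k, e, a, ha, hk, rfl⟩ := hf
    exact ((hV e a ha).comp measurable_fst).mul (measurable_snd.pow_const k)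
  | zero => exact measurable_const
  | add f g _ _ hf hg => exact hf.add hg
  | smul c f _ hf => exact hf.const_smul c

lemma hcExt_cont {d : ℕ} {f : Ω × ℝ → ℝ}
    (hf : f ∈ hcExt V d) (x : Ω) : Continuous fun y => f (x, y) := by
  induction hf using Submodule.span_induction with
  | mem f hf =>
    obtain ⟨k, e, a, ha, hk, rfl⟩ := hf
    simp only
    fun_prop
  | zero => exact continuous_const
  | add f g _ _ hf hg => exact hf.add hg
  | smul c f _ hf => exact hf.const_smul c

lemma hcExt_allLp [IsProbabilityMeasure μ] (hV : ∀ d f, f ∈ V d → HCAllLp f μ) {ν : Measure ℝ}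
    [IsProbabilityMeasure ν] (hν : HCAllLp (fun y => y) ν) {d : ℕ} {f : Ω × ℝ → ℝ}
    (hf : f ∈ hcExt V d) : HCAllLp f (μ.prod ν) := by
  induction hf using Submodule.span_induction with
  | mem f hf =>
    obtain ⟨k, e, a, ha, hk, rfl⟩ := hf
    have h1 : HCAllLp (fun z : Ω × ℝ => a z.1) (μ.prod ν) := fun q hq =>
      (hV e a ha q hq).comp_fst ν
    have h2 : HCAllLp (fun z : Ω × ℝ => z.2) (μ.prod ν) := fun q hq =>
      (hν q hq).comp_snd μ
    exact h1.mul (h2.pow k)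
  | zero => exact fun q hq => MemLp.zero
  | add f g _ _ hf hg => exact hf.add hg
  | smul c f _ hf => exact hf.const_mul c

lemma hcExt_poly {d k e : ℕ} {a : Ω → ℝ} (ha : a ∈ V e) (h : e + k ≤ d) (w : ℕ → ℝ) :
    (fun z : Ω × ℝ => a z.1 * ∑ m ∈ Finset.range (k + 1), z.2 ^ m * w m) ∈ hcExt V d := by
  have : (fun z : Ω × ℝ => a z.1 * ∑ m ∈ Finset.range (k + 1), z.2 ^ m * w m) =
      ∑ m ∈ Finset.range (k + 1), w m • (fun z : Ω × ℝ => a z.1 * z.2 ^ m) := by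
    ext z
    simp only [Finset.sum_apply, Pi.smul_apply, smul_eq_mul, Finset.mul_sum]
    exact Finset.sum_congr rfl fun _ _ => by ring
  rw [this]
  refine Submodule.sum_mem _ fun m hm => Submodule.smul_mem _ _ (hcExt_gen ha ?_)
  have := Finset.mem_range.1 hm
  omega

lemma hcExt_shift {d : ℕ} {f : Ω × ℝ → ℝ} (hf : f ∈ hcExt V d) (c : ℝ) :
    (fun z : Ω × ℝ => f (z.1, z.2 + c)) ∈ hcExt V d := by
  induction hf using Submodule.span_induction with
  | mem f hf =>
    obtain ⟨k, e, a, ha, hk, rfl⟩ := hf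
    simp only [add_pow, mul_assoc]
    exact hcExt_poly ha hk _
  | zero => exact Submodule.zero_mem _
  | add f g _ _ hf hg => exact Submodule.add_mem _ hf hg
  | smul c f _ hf => exact Submodule.smul_mem _ _ hf

lemma hcExt_diff {d : ℕ} {f : Ω × ℝ → ℝ} (hf : f ∈ hcExt V d) (c : ℝ) :
    (fun z : Ω × ℝ => f (z.1, z.2 + c) - f (z.1, z.2 + -c)) ∈ hcExt V (d - 1) ∧
    (d = 0 → (fun z : Ω × ℝ => f (z.1, z.2 + c) - f (z.1, z.2 + -c)) = 0) := by
  induction hf using Submodule.span_induction with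
  | mem f hf =>
    obtain ⟨k, e, a, ha, hk, rfl⟩ := hf
    rcases k with _ | k
    · simp only [pow_zero, sub_self]
      exact ⟨Submodule.zero_mem _, fun _ => rfl⟩
    · refine ⟨?_, fun h => by omega⟩
      have : (fun z : Ω × ℝ => a z.1 * (z.2 + c) ^ (k + 1) - a z.1 * (z.2 + -c) ^ (k + 1)) =
          fun z : Ω × ℝ => a z.1 * ∑ m ∈ Finset.range (k + 1), z.2 ^ m *
            ((c ^ (k + 1 - m) - (-c) ^ (k + 1 - m)) * ((k + 1).choose m)) := by
        ext z
        rw [← mul_sub, add_pow, add_pow, Finset.sum_range_succ, Finset.sum_range_succ _ (k + 1)]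
        simp only [Nat.sub_self, pow_zero, add_sub_add_right_eq_sub, ← Finset.sum_sub_distrib]
        congr 1
        exact Finset.sum_congr rfl fun _ _ => by ring
      simp only
      rw [this]
      exact hcExt_poly ha (by omega) _
  | zero => simpa using ⟨Submodule.zero_mem _, fun _ => rfl⟩
  | add f g _ _ hf hg =>
    have : (fun z : Ω × ℝ => (f + g) (z.1, z.2 + c) - (f + g) (z.1, z.2 + -c)) =
      (fun z : Ω × ℝ => f (z.1, z.2 + c) - f (z.1, z.2 + -c)) +
      (fun z : Ω × ℝ => g (z.1, z.2 + c) - g (z.1, z.2 + -c)) := by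
      ext z; simp only [Pi.add_apply]; ring
    rw [this]
    exact ⟨Submodule.add_mem _ hf.1 hg.1, fun h => by rw [hf.2 h, hg.2 h, add_zero]⟩
  | smul r f _ hf =>
    have : (fun z : Ω × ℝ => (r • f) (z.1, z.2 + c) - (r • f) (z.1, z.2 + -c)) =
      r • (fun z : Ω × ℝ => f (z.1, z.2 + c) - f (z.1, z.2 + -c)) := by
      ext z; simp only [Pi.smul_apply, smul_eq_mul]; ring
    rw [this]
    exact ⟨Submodule.smul_mem _ _ hf.1, fun h => by rw [hf.2 h, smul_zero]⟩

lemma hcExt_zero (hm : Monotone V) {d : ℕ} {f : Ω × ℝ → ℝ} (hf : f ∈ hcExt V d) :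
    (fun x => f (x, 0)) ∈ V d := by
  induction hf using Submodule.span_induction with
  | mem f hf =>
    obtain ⟨k, e, a, ha, hk, rfl⟩ := hf
    rcases k with _ | k
    · simpa using hm (by omega : e ≤ d) ha
    · have h : (fun x => a x * (0 : ℝ) ^ (k + 1)) = 0 := by ext; simp
      simp only
      rw [h]
      exact (V d).zero_mem
  | zero => exact Submodule.zero_mem _
  | add f g _ _ hf hg => exact Submodule.add_mem _ hf hg
  | smul c f _ hf => exact Submodule.smul_mem _ _ hf
end

/-- Law of `c` times a sum of `N` independent signs. -/
noncomputable def hcLam (c : ℝ) : ℕ → Measure ℝ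
  | 0 => Measure.dirac 0
  | N + 1 => ((1 : ℝ≥0∞) / 2) • (hcLam c N).map (fun y => y + c) +
      ((1 : ℝ≥0∞) / 2) • (hcLam c N).map (fun y => y + -c)

instance hcLam_prob (c : ℝ) (N : ℕ) : IsProbabilityMeasure (hcLam c N) := by
  induction N with
  | zero => unfold hcLam; infer_instance
  | succ N ih =>
    constructor
    have h1 : Measurable fun y : ℝ => y + c := by fun_prop
    have h2 : Measurable fun y : ℝ => y + -c := by fun_prop
    simp [hcLam, Measure.map_apply h1, Measure.map_apply h2, ENNReal.inv_two_add_inv_two]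

lemma hcLam_bound (c : ℝ) (N : ℕ) : ∀ᵐ y ∂(hcLam c N), |y| ≤ N * |c| := by
  induction N with
  | zero => simp [hcLam, ae_dirac_eq]
  | succ N ih =>
    have hms : MeasurableSet {y : ℝ | |y| ≤ ((N + 1 : ℕ) : ℝ) * |c|} :=
      measurableSet_le (by fun_prop) (by fun_prop)
    have hc : ∀ c' : ℝ, |c'| = |c| →
        ∀ᵐ y ∂((hcLam c N).map (fun y => y + c')), |y| ≤ ((N + 1 : ℕ) : ℝ) * |c| := by
      intro c' hc'
      rw [ae_map_iff (by fun_prop) hms]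
      filter_upwards [ih] with y hy
      have := abs_add_le y c'
      push_cast
      linarith
    rw [hcLam, ae_add_measure_iff]
    exact ⟨Measure.ae_smul_measure (hc c rfl) _, Measure.ae_smul_measure (hc (-c) (abs_neg c)) _⟩

lemma hcLam_allLp (c : ℝ) (N : ℕ) : HCAllLp (fun y => y) (hcLam c N) := fun _ _ =>
  MemLp.of_bound (by fun_prop) (N * |c|) (hcLam_bound c N)

section
variable {Ω : Type*} [MeasurableSpace Ω] {μ : Measure Ω} {V : ℕ → Submodule ℝ (Ω → ℝ)}

lemma hcLam_prod [IsProbabilityMeasure μ] (c : ℝ) (N : ℕ) : μ.prod (hcLam c (N + 1)) =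
    ((1 : ℝ≥0∞) / 2) • (μ.prod (hcLam c N)).map (fun z => (z.1, z.2 + c)) +
      ((1 : ℝ≥0∞) / 2) • (μ.prod (hcLam c N)).map (fun z => (z.1, z.2 + -c)) := by
  have hc : ∀ c' : ℝ, (μ.prod (hcLam c N)).map (fun z => (z.1, z.2 + c')) =
      μ.prod ((hcLam c N).map (fun y => y + c')) := by
    intro c'
    have := Measure.map_prod_map μ (hcLam c N) (f := id) (g := fun y => y + c') measurable_id
      (by fun_prop)
    rw [Measure.map_id] at this
    exact this.symm
  rw [hc, hc, hcLam, Measure.prod_add, Measure.prod_smul_right, Measure.prod_smul_right]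

lemma hcLam_integral [IsProbabilityMeasure μ] (c : ℝ) (N : ℕ) {φ : Ω × ℝ → ℝ} (hm : Measurable φ)
    (hi : Integrable φ (μ.prod (hcLam c (N + 1)))) :
    ∫ z, φ z ∂(μ.prod (hcLam c (N + 1))) =
      (∫ z, φ (z.1, z.2 + c) ∂(μ.prod (hcLam c N)) +
        ∫ z, φ (z.1, z.2 + -c) ∂(μ.prod (hcLam c N))) / 2 := by
  rw [hcLam_prod] at hi ⊢
  rw [integrable_add_measure] at hi
  rw [integral_add_measure hi.1 hi.2, integral_smul_measure, integral_smul_measure,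
    integral_map (by fun_prop) hm.aestronglyMeasurable,
    integral_map (by fun_prop) hm.aestronglyMeasurable]
  simp
  ring

lemma HCFam.lam [IsProbabilityMeasure μ] (h : HCFam μ V) (c : ℝ) (N : ℕ) :
    HCFam (μ.prod (hcLam c N)) (hcExt V) := by
  have hall : ∀ N d f, f ∈ hcExt V d → HCAllLp f (μ.prod (hcLam c N)) := fun N d f hf =>
    hcExt_allLp h.allLp (hcLam_allLp c N) hf
  refine ⟨hcExt_mono, fun d f hf => hcExt_meas h.meas hf, hall N, ?_⟩
  induction N with
  | zero =>
    intro d f hf t ht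
    have hfm := hcExt_meas h.meas hf
    have key : ∀ φ : Ω × ℝ → ℝ, Measurable φ →
        ∫ z, φ z ∂(μ.prod (hcLam c 0)) = ∫ x, φ (x, 0) ∂μ := by
      intro φ hφ
      rw [hcLam, Measure.prod_dirac, integral_map (by fun_prop) hφ.aestronglyMeasurable]
    rw [key _ (by fun_prop), key _ (by fun_prop)]
    exact h.ineq d _ (hcExt_zero h.mono hf) t ht
  | succ N ih =>
    intro d f hf t ht
    have hfm := hcExt_meas h.meas hf
    have hL := hall (N + 1) d f hf
    rw [hcLam_integral c N (φ := fun z => |f z| ^ t) (by fun_prop) (hL.integrable_rpow (by linarith)),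
      hcLam_integral c N (φ := fun z => f z ^ 2) (by fun_prop) hL.integrable_sq]
    have hA : (fun z : Ω × ℝ => (1 / 2 : ℝ) * (f (z.1, z.2 + c) + f (z.1, z.2 + -c))) ∈ hcExt V d :=
      Submodule.smul_mem _ (1 / 2 : ℝ)
        (Submodule.add_mem _ (hcExt_shift hf c) (hcExt_shift hf (-c)))
    obtain ⟨hB1, hB2⟩ := hcExt_diff hf c
    have hB : (fun z : Ω × ℝ => (1 / 2 : ℝ) * (f (z.1, z.2 + c) - f (z.1, z.2 + -c))) ∈
        hcExt V (d - 1) := Submodule.smul_mem _ (1 / 2 : ℝ) hB1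
    have := hc_step (hall N _ _ hA) (hall N _ _ hB) ht (d := d) (ih _ _ hA t ht) (by
      rcases d with _ | d
      · have h0 := hB2 rfl
        have h0' : ∀ z : Ω × ℝ, f (z.1, z.2 + c) - f (z.1, z.2 + -c) = 0 := fun z => congrFun h0 z
        simp only [h0', mul_zero, abs_zero]
        rw [Real.zero_rpow (by linarith)]
        simp only [integral_zero]
        exact mul_nonneg (Real.rpow_nonneg (by linarith) _) (by positivity)
      · have := ih _ _ hB t ht
        simpa using this)
    have e1 : ∀ x y : ℝ, 1 / 2 * (x + y) + 1 / 2 * (x - y) = x := fun x y => by ring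
    have e2 : ∀ x y : ℝ, 1 / 2 * (x + y) - 1 / 2 * (x - y) = y := fun x y => by ring
    simp only [e1, e2] at this
    exact this
end

lemma hcLam_one : hcLam 1 1 = ((1 : ℝ≥0∞) / 2) • Measure.dirac (1 : ℝ) +
    ((1 : ℝ≥0∞) / 2) • Measure.dirac (-1 : ℝ) := by
  simp only [hcLam]
  have h1 : Measurable fun y : ℝ => y + 1 := by fun_prop
  have h2 : Measurable fun y : ℝ => y + -1 := by fun_prop
  rw [Measure.map_dirac' h1, Measure.map_dirac' h2]
  simp

lemma hcLam_charFun_succ (c : ℝ) (N : ℕ) (u : ℝ) : charFun (hcLam c (N + 1)) u =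
    charFun (hcLam c N) u * ((Complex.exp (u * c * Complex.I) +
      Complex.exp (-(u * c * Complex.I))) / 2) := by
  have hb : ∀ (P : Measure ℝ) [IsFiniteMeasure P],
      Integrable (fun x : ℝ => Complex.exp (u * x * Complex.I)) P := by
    intro P _
    refine Integrable.of_bound (by fun_prop) 1 (ae_of_all _ fun x => ?_)
    rw [← Complex.ofReal_mul, Complex.norm_exp_ofReal_mul_I]
  have hfin : ∀ c' : ℝ, IsFiniteMeasure (((1 : ℝ≥0∞) / 2) • (hcLam c N).map (fun y => y + c')) := by
    intro c'
    refine ⟨?_⟩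
    simpa using ENNReal.mul_lt_top (by simp) (measure_lt_top _ _)
  have := hfin c
  have := hfin (-c)
  simp only [charFun_apply_real]
  rw [hcLam, integral_add_measure (hb _) (hb _), integral_smul_measure, integral_smul_measure,
    integral_map (by fun_prop) (by fun_prop), integral_map (by fun_prop) (by fun_prop)]
  have e : ∀ (c' : ℝ), ∫ x : ℝ, Complex.exp (u * ((x + c' : ℝ) : ℂ) * Complex.I) ∂(hcLam c N) =
      (∫ x : ℝ, Complex.exp (u * x * Complex.I) ∂(hcLam c N)) *
        Complex.exp (u * c' * Complex.I) := by
    intro c'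
    rw [← integral_mul_const]
    congr 1; ext x
    rw [← Complex.exp_add]; congr 1; push_cast; ring
  rw [e, e]
  simp
  ring

lemma hcLam_charFun (c : ℝ) (N : ℕ) (u : ℝ) : charFun (hcLam c N) u =
    charFun (hcLam 1 1) (c * u) ^ N := by
  have h0 : ∀ c u, charFun (hcLam c 0) u = 1 := fun c u => by
    simp [hcLam, charFun_apply_real]
  induction N with
  | zero => rw [h0, pow_zero]
  | succ N ih =>
    rw [hcLam_charFun_succ, ih, pow_succ]
    congr 1
    have h1 := hcLam_charFun_succ 1 0 (c * u)
    rw [h0, zero_add] at h1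
    rw [h1]
    push_cast
    rw [one_mul, mul_one, mul_comm (u : ℂ) c]

lemma hcLam_integral_id (N : ℕ) (c : ℝ) {φ : ℝ → ℝ} (hm : Continuous φ) :
    ∫ z, φ z ∂(hcLam c (N + 1)) =
      (∫ z, φ (z + c) ∂(hcLam c N) + ∫ z, φ (z + -c) ∂(hcLam c N)) / 2 := by
  have hi : Integrable φ (hcLam c (N + 1)) := by
    obtain ⟨C, hC⟩ := (isCompact_Icc (a := -((N + 1 : ℕ) * |c|)) (b := (N + 1 : ℕ) * |c|)).exists_bound_of_continuousOn hm.continuousOn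
    refine Integrable.of_bound hm.aestronglyMeasurable C ?_
    filter_upwards [hcLam_bound c (N + 1)] with y hy
    exact hC y (abs_le.1 hy)
  rw [hcLam] at hi ⊢
  rw [integrable_add_measure] at hi
  rw [integral_add_measure hi.1 hi.2, integral_smul_measure, integral_smul_measure,
    integral_map (by fun_prop) hm.aestronglyMeasurable,
    integral_map (by fun_prop) hm.aestronglyMeasurable]
  simp
  ring

lemma hcLam_sq (c : ℝ) (N : ℕ) : ∫ y, y ^ 2 ∂(hcLam c N) = N * c ^ 2 := by
  induction N with
  | zero => simp [hcLam]
  | succ N ih =>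
    have hL : ∀ c' : ℝ, Integrable (fun y => (y + c') ^ 2) (hcLam c N) := fun c' =>
      (HCAllLp.add (hcLam_allLp c N) (g := fun _ => c') (fun q _ => memLp_const c')).integrable_sq
    rw [hcLam_integral_id N c (φ := fun y => y ^ 2) (by fun_prop), ← integral_add (hL c) (hL (-c)),
      ← integral_div]
    have : ∀ y : ℝ, ((y + c) ^ 2 + (y + -c) ^ 2) / 2 = y ^ 2 + c ^ 2 := fun y => by ring
    simp only [this]
    rw [integral_add (hcLam_allLp c N).integrable_sq (integrable_const _), ih]
    simp
    ring

lemma hc_clt {φ : ℝ → ℝ} (hφ : Continuous φ) {M : ℝ} (hM : ∀ x, |φ x| ≤ M) :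
    Filter.Tendsto (fun n : ℕ => ∫ y, φ y ∂(hcLam (√n)⁻¹ n)) Filter.atTop
      (nhds (∫ y, φ y ∂(gaussianReal 0 1))) := by
  let P : ℕ → ProbabilityMeasure ℝ := fun n => ⟨hcLam (√n)⁻¹ n, inferInstance⟩
  let P0 : ProbabilityMeasure ℝ := ⟨gaussianReal 0 1, inferInstance⟩
  have h : Filter.Tendsto P Filter.atTop (nhds P0) := by
    refine ProbabilityMeasure.tendsto_iff_tendsto_charFun.2 fun t => ?_
    have h0 : ∫ y, id y ∂(hcLam 1 1) = 0 := by
      rw [hcLam_integral_id 0 1 continuous_id]; simp [hcLam]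
    have h1 : ∫ y, (id ^ 2 : ℝ → ℝ) y ∂(hcLam 1 1) = 1 := by
      have := hcLam_sq 1 1
      simpa using this
    have := tendsto_charFun_inv_sqrt_mul_pow (P := hcLam 1 1) (X := id) aemeasurable_id h0 h1 t
    rw [Measure.map_id] at this
    simp only [← hcLam_charFun] at this
    change Filter.Tendsto (fun n : ℕ => charFun (hcLam (√n)⁻¹ n) t) Filter.atTop
      (nhds (charFun (gaussianReal 0 1) t))
    rw [charFun_gaussianReal]
    simpa [neg_div] using this
  have := (ProbabilityMeasure.tendsto_iff_forall_integral_tendsto.1 h)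
    (BoundedContinuousFunction.ofNormedAddCommGroup φ hφ M hM)
  exact this

/-- constants -/
lemma hcFam_unit : HCFam (Measure.dirac ()) (fun _ => ⊤) where
  mono := fun _ _ _ => le_rfl
  meas := fun _ _ _ => measurable_from_top
  allLp := fun _ f _ q _ => MemLp.of_bound (measurable_from_top.aestronglyMeasurable) |f ()|
    (ae_of_all _ fun _ => le_rfl)
  ineq := fun d f _ t ht => by
    rw [integral_dirac, integral_dirac, hc_sq_rpow]
    refine le_mul_of_one_le_left (by positivity) (Real.one_le_rpow (by linarith) (by positivity))

lemma hcLam_moment (k : ℕ) : ∃ C : ℝ, 0 ≤ C ∧ ∀ n : ℕ, ∫ y, (y ^ k) ^ 2 ∂(hcLam (√n)⁻¹ n) ≤ C := by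
  rcases k with _ | k
  · exact ⟨1, by norm_num, fun n => by simp⟩
  set t : ℝ := 2 * ((k + 1 : ℕ) : ℝ) with htdef
  have ht : 2 ≤ t := by rw [htdef]; push_cast; nlinarith [(Nat.cast_nonneg k : (0 : ℝ) ≤ k)]
  refine ⟨(t - 1) ^ (t * (1 : ℕ) / 2), Real.rpow_nonneg (by linarith) _, fun n => ?_⟩
  have hf : (fun z : Unit × ℝ => (fun _ : Unit => (1 : ℝ)) z.1 * z.2 ^ 1) ∈
      hcExt (fun _ => (⊤ : Submodule ℝ (Unit → ℝ))) 1 := 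
    hcExt_gen (V := fun _ => (⊤ : Submodule ℝ (Unit → ℝ))) (e := 0) (k := 1) (a := fun _ => 1)
      Submodule.mem_top (by norm_num)
  have := (hcFam_unit.lam (√n)⁻¹ n).ineq 1 _ hf t ht
  simp only [one_mul, pow_one] at this
  have e : ∀ φ : ℝ → ℝ, ∫ z : Unit × ℝ, φ z.2 ∂((Measure.dirac ()).prod (hcLam (√n)⁻¹ n)) =
      ∫ y, φ y ∂(hcLam (√n)⁻¹ n) := by
    intro φ
    have := integral_prod_mul (μ := Measure.dirac ()) (ν := hcLam (√n)⁻¹ n) (fun _ => (1 : ℝ)) φ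
    simpa using this
  rw [e (fun y => |y| ^ t), e (fun y => y ^ 2), hcLam_sq] at this
  have e2 : ∀ y : ℝ, |y| ^ t = (y ^ (k + 1)) ^ 2 := fun y => by
    rw [htdef, Real.rpow_mul (abs_nonneg y), Real.rpow_natCast, Real.rpow_two, sq_abs]; ring
  simp only [e2] at this
  refine this.trans (mul_le_of_le_one_right (Real.rpow_nonneg (by linarith) _) ?_)
  refine Real.rpow_le_one (by positivity) ?_ (by positivity)
  rw [inv_pow, Real.sq_sqrt (by positivity)]
  exact mul_inv_le_one

section
variable {Ω : Type*} [MeasurableSpace Ω] {μ : Measure Ω} {V : ℕ → Submodule ℝ (Ω → ℝ)}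

lemma hcExt_bdd [IsProbabilityMeasure μ] (hV : ∀ d f, f ∈ V d → HCAllLp f μ) {d : ℕ}
    {f : Ω × ℝ → ℝ} (hf : f ∈ hcExt V d) :
    ∃ C : ℝ, 0 ≤ C ∧ ∀ n : ℕ, ∫ z, f z ^ 2 ∂(μ.prod (hcLam (√n)⁻¹ n)) ≤ C := by
  induction hf using Submodule.span_induction with
  | mem f hf =>
    obtain ⟨k, e, a, ha, hk, rfl⟩ := hf
    obtain ⟨C, hC0, hC⟩ := hcLam_moment k
    have h0 : 0 ≤ ∫ x, a x ^ 2 ∂μ := integral_nonneg fun _ => sq_nonneg _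
    refine ⟨(∫ x, a x ^ 2 ∂μ) * C, by positivity, fun n => ?_⟩
    simp only [mul_pow]
    rw [integral_prod_mul (fun x => a x ^ 2) (fun y => (y ^ k) ^ 2)]
    exact mul_le_mul_of_nonneg_left (hC n) h0
  | zero => exact ⟨0, le_rfl, fun n => by simp⟩
  | add f g hf' hg' hf hg =>
    obtain ⟨C, hC0, hC⟩ := hf
    obtain ⟨D, hD0, hD⟩ := hg
    refine ⟨2 * (C + D), by positivity, fun n => ?_⟩
    have h1 := hcExt_allLp hV (hcLam_allLp (√n)⁻¹ n) hf'
    have h2 := hcExt_allLp hV (hcLam_allLp (√n)⁻¹ n) hg'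
    calc _ ≤ ∫ z, 2 * (f z ^ 2 + g z ^ 2) ∂(μ.prod (hcLam (√n)⁻¹ n)) := by
          refine integral_mono (h1.add h2).integrable_sq
            ((h1.integrable_sq.add h2.integrable_sq).const_mul 2) fun z => ?_
          simp only [Pi.add_apply]
          nlinarith [sq_nonneg (f z - g z)]
      _ ≤ _ := by
          rw [integral_const_mul, integral_add h1.integrable_sq h2.integrable_sq]
          linarith [hC n, hD n]
  | smul c f _ hf =>
    obtain ⟨C, hC0, hC⟩ := hf
    refine ⟨c ^ 2 * C, by positivity, fun n => ?_⟩
    simp only [Pi.smul_apply, smul_eq_mul, mul_pow]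
    rw [integral_const_mul]
    exact mul_le_mul_of_nonneg_left (hC n) (sq_nonneg c)

lemma hc_clt_prod [IsProbabilityMeasure μ] {F : Ω × ℝ → ℝ} (hm : Measurable F)
    (hc : ∀ x, Continuous fun y => F (x, y)) {M : ℝ} (hM : ∀ z, |F z| ≤ M) :
    Filter.Tendsto (fun n : ℕ => ∫ z, F z ∂(μ.prod (hcLam (√n)⁻¹ n))) Filter.atTop
      (nhds (∫ z, F z ∂(μ.prod (gaussianReal 0 1)))) := by
  have hi : ∀ (ν : Measure ℝ) [IsProbabilityMeasure ν], Integrable F (μ.prod ν) := fun ν _ =>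
    Integrable.of_bound hm.aestronglyMeasurable M (ae_of_all _ hM)
  rw [integral_prod _ (hi _)]
  have : ∀ n : ℕ, ∫ z, F z ∂(μ.prod (hcLam (√n)⁻¹ n)) =
    ∫ x, ∫ y, F (x, y) ∂(hcLam (√n)⁻¹ n) ∂μ := fun n => integral_prod _ (hi _)
  simp only [this]
  refine tendsto_integral_of_dominated_convergence (fun _ => M) ?_ (integrable_const _) ?_ ?_
  · intro n
    exact (hm.stronglyMeasurable.integral_prod_right').aestronglyMeasurable
  · intro n
    refine ae_of_all _ fun x => ?_
    have := norm_integral_le_of_norm_le_const (μ := hcLam (√n)⁻¹ n) (f := fun y => F (x, y))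
      (C := M) (ae_of_all _ fun y => hM (x, y))
    simpa using this
  · exact ae_of_all _ fun x => hc_clt (hc x) fun y => hM (x, y)

lemma hc_gauss_allLp : HCAllLp (fun y => y) (gaussianReal 0 1) := fun q hq =>
  memLp_id_gaussianReal' q hq

lemma HCFam.gauss [IsProbabilityMeasure μ] (h : HCFam μ V) :
    HCFam (μ.prod (gaussianReal 0 1)) (hcExt V) := by
  have hall : ∀ d f, f ∈ hcExt V d → HCAllLp f (μ.prod (gaussianReal 0 1)) := fun d f hf =>
    hcExt_allLp h.allLp hc_gauss_allLp hf
  refine ⟨hcExt_mono, fun d f hf => hcExt_meas h.meas hf, hall, fun d f hf t ht => ?_⟩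
  have hfm := hcExt_meas h.meas hf
  have hfc := hcExt_cont hf
  have hfL := hall d f hf
  have ht0 : 0 < t := by linarith
  set K := (t - 1) ^ (t * d / 2)
  have hK : 0 ≤ K := Real.rpow_nonneg (by linarith) _
  set P := μ.prod (gaussianReal 0 1)
  have hLn : ∀ n : ℕ, HCAllLp f (μ.prod (hcLam (√n)⁻¹ n)) := fun n =>
    hcExt_allLp h.allLp (hcLam_allLp _ _) hf
  obtain ⟨C, hC0, hC⟩ := hcExt_bdd h.allLp hf
  have hfc2 : ∀ x, Continuous fun y => |f (x, y)| ^ t := fun x =>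
    (hfc x).abs.rpow_const fun _ => Or.inr ht0.le
  -- fourth moments
  obtain ⟨C4, hC40, hC4⟩ : ∃ C4 : ℝ, 0 ≤ C4 ∧
      ∀ n : ℕ, ∫ z, f z ^ 4 ∂(μ.prod (hcLam (√n)⁻¹ n)) ≤ C4 := by
    refine ⟨((4 : ℝ) - 1) ^ ((4 : ℝ) * d / 2) * C ^ ((4 : ℝ) / 2),
      mul_nonneg (Real.rpow_nonneg (by norm_num) _) (Real.rpow_nonneg hC0 _), fun n => ?_⟩
    have h4 := (h.lam (√n)⁻¹ n).ineq d f hf 4 (by norm_num)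
    have e : ∀ z, |f z| ^ (4 : ℝ) = f z ^ 4 := fun z => by
      rw [show (4 : ℝ) = ((4 : ℕ) : ℝ) by norm_num, Real.rpow_natCast]
      exact Even.pow_abs (by decide) _
    simp only [e] at h4
    refine h4.trans (mul_le_mul_of_nonneg_left ?_ (Real.rpow_nonneg (by norm_num) _))
    exact Real.rpow_le_rpow (integral_nonneg fun _ => sq_nonneg _) (hC n) (by norm_num)
  have main : ∀ M : ℝ, 0 < M → ∀ L : ℝ, 0 < L →
      ∫ z, min (|f z| ^ t) M ∂P ≤ K * (∫ z, f z ^ 2 ∂P + C4 / L) ^ (t / 2) := by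
    intro M hM L hL
    have t1 := hc_clt_prod (μ := μ) (F := fun z => min (|f z| ^ t) M) (M := M) (by fun_prop)
      (fun x => (hfc2 x).min continuous_const) (fun z => by
        rw [abs_of_nonneg (le_min (Real.rpow_nonneg (abs_nonneg _) _) hM.le)]
        exact min_le_right _ _)
    have t2 := hc_clt_prod (μ := μ) (F := fun z => min (f z ^ 2) L) (M := L) (by fun_prop)
      (fun x => ((hfc x).pow 2).min continuous_const) (fun z => by
        rw [abs_of_nonneg (le_min (sq_nonneg _) hL.le)]
        exact min_le_right _ _)
    have imin : ∀ {Q : Measure (Ω × ℝ)} [IsFiniteMeasure Q], HCAllLp f Q →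
        Integrable (fun z => min (f z ^ 2) L) Q := fun hQ =>
      hQ.integrable_sq.inf (integrable_const _)
    have t3 := ((t2.add_const (C4 / L)).rpow_const (p := t / 2) (Or.inr (by positivity))).const_mul K
    have h1 : ∫ z, min (|f z| ^ t) M ∂P ≤ K * (∫ z, min (f z ^ 2) L ∂P + C4 / L) ^ (t / 2) := by
      refine le_of_tendsto_of_tendsto' t1 t3 fun n => ?_
      have i1 := (hLn n).integrable_rpow ht0.le
      have b1 : ∫ z, min (|f z| ^ t) M ∂(μ.prod (hcLam (√n)⁻¹ n)) ≤
          ∫ z, |f z| ^ t ∂(μ.prod (hcLam (√n)⁻¹ n)) :=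
        integral_mono (i1.inf (integrable_const _)) i1 fun z => min_le_left _ _
      refine b1.trans (((h.lam (√n)⁻¹ n).ineq d f hf t ht).trans ?_)
      refine mul_le_mul_of_nonneg_left (Real.rpow_le_rpow (integral_nonneg fun _ => sq_nonneg _) ?_
        (by positivity)) hK
      calc _ ≤ ∫ z, (min (f z ^ 2) L + f z ^ 4 / L) ∂(μ.prod (hcLam (√n)⁻¹ n)) := by
            refine integral_mono (hLn n).integrable_sq ((imin (hLn n)).add
              (((hLn n).pow 4).integrable.div_const L)) fun z => ?_
            simp only
            rcases le_total (f z ^ 2) L with hz | hz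
            · rw [min_eq_left hz]
              have : 0 ≤ f z ^ 4 / L := by positivity
              linarith
            · rw [min_eq_right hz]
              have : f z ^ 2 ≤ f z ^ 4 / L := by
                rw [le_div_iff₀ hL]; nlinarith [sq_nonneg (f z)]
              linarith
        _ ≤ _ := by
            rw [integral_add (imin (hLn n)) (((hLn n).pow 4).integrable.div_const L), integral_div]
            gcongr
            exact hC4 n
    refine h1.trans (mul_le_mul_of_nonneg_left (Real.rpow_le_rpow ?_ ?_ (by positivity)) hK)
    · have : 0 ≤ ∫ z, min (f z ^ 2) L ∂P := integral_nonneg fun z => le_min (sq_nonneg _) hL.le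
      positivity
    · have := integral_mono (imin hfL) hfL.integrable_sq (fun z => min_le_left _ _)
      linarith
  have main2 : ∀ M : ℝ, 0 < M → ∫ z, min (|f z| ^ t) M ∂P ≤ K * (∫ z, f z ^ 2 ∂P) ^ (t / 2) := by
    intro M hM
    have l1 : Filter.Tendsto (fun L : ℝ => C4 / L) Filter.atTop (nhds 0) :=
      tendsto_const_nhds.div_atTop Filter.tendsto_id
    have l2 := ((l1.const_add (∫ z, f z ^ 2 ∂P)).rpow_const (p := t / 2)
      (Or.inr (by positivity))).const_mul K
    rw [add_zero] at l2
    refine ge_of_tendsto l2 ?_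
    filter_upwards [Filter.eventually_gt_atTop 0] with L hL
    exact main M hM L hL
  have l3 : Filter.Tendsto (fun n : ℕ => ∫ z, min (|f z| ^ t) ((n : ℝ) + 1) ∂P) Filter.atTop
      (nhds (∫ z, |f z| ^ t ∂P)) := by
    refine tendsto_integral_of_dominated_convergence (fun z => |f z| ^ t) ?_
      (hfL.integrable_rpow ht0.le) ?_ ?_
    · intro n
      exact Measurable.aestronglyMeasurable (by fun_prop)
    · intro n
      refine ae_of_all _ fun z => ?_
      rw [Real.norm_eq_abs, abs_of_nonneg (le_min (Real.rpow_nonneg (abs_nonneg _) _)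
        (by positivity))]
      exact min_le_left _ _
    · refine ae_of_all _ fun z => ?_
      refine tendsto_const_nhds.congr' ?_
      obtain ⟨m, hm⟩ := exists_nat_ge (|f z| ^ t)
      filter_upwards [Filter.eventually_ge_atTop m] with n hn
      rw [min_eq_left]
      have : (m : ℝ) ≤ n := by exact_mod_cast hn
      linarith
  exact le_of_tendsto' l3 fun n => main2 _ (by positivity)
end

lemma HCFam.transfer {Ω Ω' : Type*} [MeasurableSpace Ω] [MeasurableSpace Ω'] {μ : Measure Ω}
    {μ' : Measure Ω'} {V : ℕ → Submodule ℝ (Ω → ℝ)} {V' : ℕ → Submodule ℝ (Ω' → ℝ)}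
    (h : HCFam μ V) {T : Ω → Ω'} (hT : MeasurePreserving T μ μ') (hm : Monotone V')
    (hmeas : ∀ d f, f ∈ V' d → Measurable f) (hV : ∀ d f, f ∈ V' d → (fun z => f (T z)) ∈ V d) :
    HCFam μ' V' where
  mono := hm
  meas := hmeas
  allLp := fun d f hf q hq => by
    have h1 := h.allLp d _ (hV d f hf) q hq
    rw [← hT.map_eq]
    exact (memLp_map_measure_iff (hmeas d f hf).aestronglyMeasurable hT.measurable.aemeasurable).2 h1
  ineq := fun d f hf t ht => by
    have h1 := h.ineq d _ (hV d f hf) t ht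
    have hfm := hmeas d f hf
    rw [← hT.map_eq, integral_map hT.measurable.aemeasurable
      (Measurable.aestronglyMeasurable (by fun_prop)), integral_map hT.measurable.aemeasurable
      (Measurable.aestronglyMeasurable (by fun_prop))]
    exact h1

/-- Polynomial functions of degree at most `d`. -/
def hcPoly (σ : Type*) [Fintype σ] (d : ℕ) : Submodule ℝ ((σ → ℝ) → ℝ) :=
  Submodule.span ℝ {f | ∃ m : σ → ℕ, ∑ i, m i ≤ d ∧ f = fun z => ∏ i, z i ^ m i}

lemma hcPoly_gen {σ : Type*} [Fintype σ] {d : ℕ} (m : σ → ℕ) (h : ∑ i, m i ≤ d) :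
    (fun z : σ → ℝ => ∏ i, z i ^ m i) ∈ hcPoly σ d := Submodule.subset_span ⟨m, h, rfl⟩

lemma hcPoly_mono (σ : Type*) [Fintype σ] : Monotone (hcPoly σ) := by
  intro d e hde
  refine Submodule.span_mono ?_
  rintro f ⟨m, h, rfl⟩
  exact ⟨m, h.trans hde, rfl⟩

lemma hcPoly_meas (σ : Type*) [Fintype σ] (d : ℕ) (f : (σ → ℝ) → ℝ) (hf : f ∈ hcPoly σ d) :
    Measurable f := by
  induction hf using Submodule.span_induction with
  | mem f h => obtain ⟨m, -, rfl⟩ := h; fun_prop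
  | zero => exact measurable_const
  | add f g _ _ hf hg => exact hf.add hg
  | smul c f _ hf => exact hf.const_smul c

lemma hcPoly_comp {σ Ω : Type*} [Fintype σ] {d : ℕ} {W : Submodule ℝ (Ω → ℝ)} {T : Ω → σ → ℝ}
    (h : ∀ m : σ → ℕ, ∑ i, m i ≤ d → (fun z => ∏ i, T z i ^ m i) ∈ W) (f : (σ → ℝ) → ℝ)
    (hf : f ∈ hcPoly σ d) : (fun z => f (T z)) ∈ W := by
  induction hf using Submodule.span_induction with
  | mem f hh => obtain ⟨m, hm, rfl⟩ := hh; exact h m hm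
  | zero => exact W.zero_mem
  | add f g _ _ hf hg => exact W.add_mem hf hg
  | smul c f _ hf => exact W.smul_mem c hf

lemma hcPoly_eval {σ : Type*} [Fintype σ] {d : ℕ} (p : MvPolynomial σ ℝ) (hp : p.totalDegree ≤ d) :
    (fun z => MvPolynomial.eval z p) ∈ hcPoly σ d := by
  have : (fun z => MvPolynomial.eval z p) =
      ∑ m ∈ p.support, p.coeff m • (fun z : σ → ℝ => ∏ i, z i ^ m i) := by
    ext z
    rw [MvPolynomial.eval_eq']
    simp [Finset.sum_apply]
  rw [this]
  refine Submodule.sum_mem _ fun m hm => Submodule.smul_mem _ _ (hcPoly_gen _ ?_)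
  refine le_trans ?_ ((MvPolynomial.le_totalDegree hm).trans hp)
  rw [Finsupp.sum_fintype _ _ (fun _ => rfl)]

lemma hcPoly_fam (n : ℕ) (ν : Fin n → Measure ℝ)
    (hν : ∀ i, ν i = gaussianReal 0 1 ∨ ν i = hcLam 1 1) :
    HCFam (Measure.pi ν) (hcPoly (Fin n)) := by
  induction n with
  | zero =>
    have hT : MeasurePreserving (fun _ : Unit => (default : Fin 0 → ℝ)) (Measure.dirac ())
        (Measure.pi ν) := by
      refine ⟨measurable_const, ?_⟩
      rw [Measure.pi_of_empty ν default]
      exact Measure.map_dirac' measurable_const _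
    exact hcFam_unit.transfer hT (hcPoly_mono _) (hcPoly_meas _) (fun _ _ _ => Submodule.mem_top)
  | succ n ih =>
    have hpr : ∀ i, IsProbabilityMeasure (ν i) := fun i => by
      rcases hν i with h | h <;> rw [h] <;> infer_instance
    have ih' := ih (fun j => ν (Fin.succAbove 0 j)) (fun j => hν _)
    have hF : HCFam ((Measure.pi fun j => ν (Fin.succAbove 0 j)).prod (ν 0))
        (hcExt (hcPoly (Fin n))) := by
      rcases hν 0 with h | h
      · rw [h]; exact ih'.gauss
      · rw [h]; exact ih'.lam 1 1
    have hT := ((measurePreserving_piFinSuccAbove ν 0).symm).comp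
      (Measure.measurePreserving_swap (μ := Measure.pi fun j => ν (Fin.succAbove 0 j)) (ν := ν 0))
    refine hF.transfer hT (hcPoly_mono _) (hcPoly_meas _) fun d f hf => ?_
    refine hcPoly_comp (fun m hm => ?_) f hf
    have : (fun z : (Fin n → ℝ) × ℝ => ∏ i, ((MeasurableEquiv.piFinSuccAbove (fun _ => ℝ) 0).symm ∘
        Prod.swap) z i ^ m i) =
        fun z => (fun y : Fin n → ℝ => ∏ i, y i ^ m i.succ) z.1 * z.2 ^ m 0 := by
      ext z
      rw [Fin.prod_univ_succ, mul_comm]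
      rfl
    rw [this]
    refine hcExt_gen (hcPoly_gen _ le_rfl) ?_
    rw [Fin.sum_univ_succ] at hm
    omega

lemma hcPoly_fam_sum (n₁ n₂ : ℕ) (ν : Fin n₁ ⊕ Fin n₂ → Measure ℝ)
    (hν : ∀ i, ν i = gaussianReal 0 1 ∨ ν i = hcLam 1 1) :
    HCFam (Measure.pi ν) (hcPoly (Fin n₁ ⊕ Fin n₂)) := by
  have hpr : ∀ i, IsProbabilityMeasure (ν i) := fun i => by
    rcases hν i with h | h <;> rw [h] <;> infer_instance
  have hF := hcPoly_fam (n₁ + n₂) (fun i => ν (finSumFinEquiv.symm i)) (fun i => hν _)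
  have hT := measurePreserving_piCongrLeft ν (finSumFinEquiv (m := n₁) (n := n₂)).symm
  refine hF.transfer hT (hcPoly_mono _) (hcPoly_meas _) fun d f hf => ?_
  refine hcPoly_comp (fun m hm => ?_) f hf
  have : (fun z : Fin (n₁ + n₂) → ℝ => ∏ i, (MeasurableEquiv.piCongrLeft (fun _ => ℝ)
      (finSumFinEquiv (m := n₁) (n := n₂)).symm) z i ^ m i) =
      fun z => ∏ i, z i ^ m (finSumFinEquiv.symm i) := by
    ext z
    rw [← Equiv.prod_comp (finSumFinEquiv (m := n₁) (n := n₂)).symm]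
    refine Finset.prod_congr rfl fun i _ => ?_
    congr 1
    exact Equiv.piCongrLeft_apply_apply (fun _ => ℝ) _ z i
  rw [this]
  refine hcPoly_gen _ ?_
  rwa [Equiv.sum_comp finSumFinEquiv.symm m]

/-- **Mixed hypercontractivity.**  For a polynomial `p` of total degree at most `d` in Gaussian
variables `G` and independent Bernoulli variables `B`, and any real `t ≥ 2`,
`E[|p(G,B)|^t] ≤ (t-1)^{td/2} E[p(G,B)²]^{t/2}`. -/
theorem mixed_hypercontractivity (n₁ n₂ d : ℕ)
    (p : MvPolynomial (Fin n₁ ⊕ Fin n₂) ℝ) (hp : p.totalDegree ≤ d)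
    (t : ℝ) (ht : 2 ≤ t) :
    (∫ z : (Fin n₁ → ℝ) × (Fin n₂ → ℝ),
        |MvPolynomial.eval (Sum.elim z.1 z.2) p| ^ t
        ∂((stdGaussian n₁).prod (bernoulliCube n₂))) ≤
      (t - 1) ^ (t * d / 2) *
        (∫ z : (Fin n₁ → ℝ) × (Fin n₂ → ℝ),
            (MvPolynomial.eval (Sum.elim z.1 z.2) p) ^ 2
            ∂((stdGaussian n₁).prod (bernoulliCube n₂))) ^ (t / 2) := by
  have hL : bernoulliPM = hcLam 1 1 := hcLam_one.symm
  let ν : Fin n₁ ⊕ Fin n₂ → Measure ℝ :=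
    Sum.elim (fun _ => gaussianReal 0 1) (fun _ => hcLam 1 1)
  have hν : ∀ i, ν i = gaussianReal 0 1 ∨ ν i = hcLam 1 1 := by
    rintro (i | i)
    · exact Or.inl rfl
    · exact Or.inr rfl
  have hpr : ∀ i, IsProbabilityMeasure (ν i) := fun i => by
    rcases hν i with h | h <;> rw [h] <;> infer_instance
  have hT := measurePreserving_sumPiEquivProdPi_symm ν
  have hI := (hcPoly_fam_sum n₁ n₂ ν hν).ineq d _ (hcPoly_eval p hp) t ht
  have hm := hcPoly_meas _ d _ (hcPoly_eval p hp)
  rw [← hT.map_eq, integral_map hT.measurable.aemeasurable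
    (Measurable.aestronglyMeasurable (by fun_prop)), integral_map hT.measurable.aemeasurable
    (Measurable.aestronglyMeasurable (by fun_prop))] at hI
  have hP : (_root_.stdGaussian n₁).prod (bernoulliCube n₂) =
      (Measure.pi fun i => ν (.inl i)).prod (Measure.pi fun i => ν (.inr i)) := by
    unfold _root_.stdGaussian bernoulliCube
    rw [hL]
    rfl
  have hE : ∀ z : (Fin n₁ → ℝ) × (Fin n₂ → ℝ),
      (MeasurableEquiv.sumPiEquivProdPi (fun _ : Fin n₁ ⊕ Fin n₂ => ℝ)).symm z =
        Sum.elim z.1 z.2 := by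
    intro z
    ext i
    rcases i with i | i <;> rfl
  rw [hP]
  simp only [hE] at hI
  exact hI
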